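/- Let k₁ ≠ k₂ be nonzero integers and let D be a triangle in the complex plane with vertices 0, 1, and (k₂/(k₂-k₁))(1+k₁ i), whose boundary edges C₀, C₁, C₂ have slopes 0, k₁, k₂ respectively. If ξ is a holomorphic function on a neighborhood of D satisfying the linear boundary conditions conj(ξ) = ξ on C₀, conj(ξ) = μ₁ ξ on C₁, and conj(ξ) = μ₂ ξ on C₂, where μⱼ = (1-kⱼi)/(1+kⱼi), then ξ is identically zero. -/

import Mathlib

open Complex

/-!
The boundary conditions say that `ξ` is tangent to each edge. Adjacent edges have independent
directions, so `ξ` vanishes at the vertices. Differentiating along an edge shows that `ξ'` is real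
there; by the maximum principle `ξ'` is real on the whole triangle, hence constant. So `ξ` is
affine, and an affine function with two distinct zeros is zero.
-/

open scoped ComplexConjugate

theorem collinear_iff_im_div_eq_zero {p q r : ℂ} :
    Collinear ℝ {p, q, r} ↔ ((r - p) / (q - p)).im = 0 := by
  constructor
  · intro h
    obtain ⟨d, hd⟩ := (collinear_iff_of_mem (Set.mem_insert p {q, r})).1 h
    obtain ⟨s, rfl⟩ := hd q (by simp)
    obtain ⟨t, rfl⟩ := hd r (by simp)
    rcases eq_or_ne d 0 with rfl | hd₀
    · simp
    · simp [mul_div_mul_right _ _ hd₀, ← ofReal_div]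
  · intro h
    rcases eq_or_ne q p with rfl | hqp
    · simpa using collinear_pair ℝ q r
    have hr : r = ((r - p) / (q - p)).re • (q - p) + p := by
      rw [real_smul, conj_eq_iff_re.1 (conj_eq_iff_im.2 h), div_mul_cancel₀ _ (sub_ne_zero.2 hqp),
        sub_add_cancel]
    refine (collinear_iff_of_mem (Set.mem_insert p {q, r})).2 ⟨q - p, ?_⟩
    rintro z (rfl | rfl | rfl)
    exacts [⟨0, by simp⟩, ⟨1, by simp⟩, ⟨_, hr⟩]

theorem exists_mem_convexHull_image_compl_of_mem_frontier_convexHull {ι E : Type*} [Finite ι]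
    [NormedAddCommGroup E] [NormedSpace ℝ E] (b : AffineBasis ι ℝ E) {x : E}
    (hx : x ∈ frontier (convexHull ℝ (Set.range b))) : ∃ i, x ∈ convexHull ℝ (b '' {i}ᶜ) := by
  classical
  have := Fintype.ofFinite ι
  rw [((Set.finite_range b).isClosed_convexHull ℝ).frontier_eq, b.interior_convexHull,
    b.convexHull_eq_nonneg_coord] at hx
  have hnonneg : ∀ j, 0 ≤ b.coord j x := hx.1
  obtain ⟨i, hi⟩ : ∃ i, b.coord i x ≤ 0 := by simpa using hx.2
  have hi₀ : b.coord i x = 0 := le_antisymm hi (hnonneg i)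
  have hsum : ∑ j ∈ Finset.univ.erase i, b.coord j x = 1 := by
    rw [Finset.sum_erase (f := (b.coord · x)) _ hi₀, b.sum_coord_apply_eq_one]
  have hcomb : ∑ j ∈ Finset.univ.erase i, b.coord j x • b j = x := by
    rw [Finset.sum_erase _ (by rw [hi₀, zero_smul]), b.linear_combination_coord_eq_self]
  refine ⟨i, hcomb ▸ (convex_convexHull ℝ _).sum_mem (fun j _ ↦ hnonneg j) hsum fun j hj ↦ ?_⟩
  exact subset_convexHull ℝ _ (Set.mem_image_of_mem b (Finset.ne_of_mem_erase hj))

theorem range_vecCons_triple {α : Type*} (a b c : α) : Set.range ![a, b, c] = {a, b, c} := by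
  simp only [Matrix.range_cons, Matrix.range_empty, Set.singleton_union, insert_empty_eq]

section Triangle

variable {E : Type*} [NormedAddCommGroup E] [NormedSpace ℝ E] {p q r : E}

theorem affineSpan_eq_top_of_not_collinear (hE : Module.finrank ℝ E = 2)
    (h : ¬ Collinear ℝ {p, q, r}) : affineSpan ℝ {p, q, r} = ⊤ := by
  have := FiniteDimensional.of_finrank_pos (hE ▸ two_pos)
  rw [← range_vecCons_triple,
    (affineIndependent_iff_not_collinear_set.2 h).affineSpan_eq_top_iff_card_eq_finrank_add_one,
    hE, Fintype.card_fin]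

theorem interior_convexHull_nonempty_of_not_collinear (hE : Module.finrank ℝ E = 2)
    (h : ¬ Collinear ℝ {p, q, r}) : (interior (convexHull ℝ {p, q, r})).Nonempty := by
  have := FiniteDimensional.of_finrank_pos (hE ▸ two_pos)
  exact interior_convexHull_nonempty_iff_affineSpan_eq_top.2 <|
    affineSpan_eq_top_of_not_collinear hE h

theorem frontier_convexHull_subset_segments (hE : Module.finrank ℝ E = 2)
    (h : ¬ Collinear ℝ {p, q, r}) :
    frontier (convexHull ℝ {p, q, r}) ⊆ segment ℝ p q ∪ segment ℝ p r ∪ segment ℝ q r := by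
  let b : AffineBasis (Fin 3) ℝ E :=
    ⟨![p, q, r], affineIndependent_iff_not_collinear_set.2 h,
      by rw [range_vecCons_triple, affineSpan_eq_top_of_not_collinear hE h]⟩
  have hb : Set.range b = {p, q, r} := range_vecCons_triple p q r
  have hface (i j k : Fin 3) (hijk : ({i}ᶜ : Set (Fin 3)) = {j, k}) :
      convexHull ℝ (b '' {i}ᶜ) = segment ℝ (b j) (b k) := by
    rw [hijk, Set.image_pair, convexHull_pair]
  intro x hx
  rw [← hb] at hx
  obtain ⟨i, hi⟩ := exists_mem_convexHull_image_compl_of_mem_frontier_convexHull b hx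
  fin_cases i
  · exact .inr (hface 0 1 2 (by ext j; fin_cases j <;> simp) ▸ hi)
  · exact .inl (.inr (hface 1 0 2 (by ext j; fin_cases j <;> simp) ▸ hi))
  · exact .inl (.inl (hface 2 0 1 (by ext j; fin_cases j <;> simp) ▸ hi))

end Triangle

theorem im_le_of_forall_mem_frontier_im_le {E : Type*} [NormedAddCommGroup E] [NormedSpace ℂ E]
    [Nontrivial E] {f : E → ℂ} {U : Set E} {C : ℝ} (hU : Bornology.IsBounded U)
    (hf : DiffContOnCl ℂ f U) (hC : ∀ z ∈ frontier U, (f z).im ≤ C) {z : E} (hz : z ∈ closure U) :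
    (f z).im ≤ C := by
  have hnorm (w : E) : ‖exp (-I * f w)‖ = Real.exp (f w).im := by simp [norm_exp]
  have hexp : DiffContOnCl ℂ (fun w ↦ exp (-I * f w)) U :=
    (by fun_prop : Differentiable ℂ fun w ↦ exp (-I * w)).comp_diffContOnCl hf
  have hle := norm_le_of_forall_mem_frontier_norm_le hU hexp (C := Real.exp C)
    (fun w hw ↦ by simpa only [hnorm, Real.exp_le_exp] using hC w hw) hz
  simpa only [hnorm, Real.exp_le_exp] using hle

theorem im_eq_of_forall_mem_frontier_im_eq {E : Type*} [NormedAddCommGroup E] [NormedSpace ℂ E]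
    [Nontrivial E] {f : E → ℂ} {U : Set E} {C : ℝ} (hU : Bornology.IsBounded U)
    (hf : DiffContOnCl ℂ f U) (hC : ∀ z ∈ frontier U, (f z).im = C) {z : E} (hz : z ∈ closure U) :
    (f z).im = C := by
  refine le_antisymm (im_le_of_forall_mem_frontier_im_le hU hf (fun w hw ↦ (hC w hw).le) hz) ?_
  have hneg := im_le_of_forall_mem_frontier_im_le hU hf.neg (C := -C)
    (fun w hw ↦ by simp [hC w hw]) hz
  simpa using hneg

theorem exists_forall_mem_closure_eq_const_of_im_eq_on_frontier {f : ℂ → ℂ} {U : Set ℂ} {C : ℝ}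
    (hUo : IsOpen U) (hUb : Bornology.IsBounded U) (hUc : IsConnected U)
    (hf : DiffContOnCl ℂ f U) (hC : ∀ z ∈ frontier U, (f z).im = C) :
    ∃ c, ∀ z ∈ closure U, f z = c := by
  obtain ⟨c, hc⟩ := (hf.differentiableOn.analyticOnNhd hUo).eq_const_of_im_eq_const
    (fun z hz ↦ im_eq_of_forall_mem_frontier_im_eq hUb hf hC (subset_closure hz)) hUo hUc
  exact ⟨c, Set.EqOn.of_subset_closure hc hf.continuousOn continuousOn_const subset_closure le_rfl⟩

theorem sub_eq_smul_of_hasDerivWithinAt_const {𝕜 F : Type*} [RCLike 𝕜] [NormedAddCommGroup F]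
    [NormedSpace 𝕜 F] {f : 𝕜 → F} {K : Set 𝕜} {c : F} (hK : Convex ℝ K)
    (hf : ∀ z ∈ K, HasDerivWithinAt f c K z) {z w : 𝕜} (hz : z ∈ K) (hw : w ∈ K) :
    f z - f w = (z - w) • c := by
  have hg (x : 𝕜) (hx : x ∈ K) : HasDerivWithinAt (fun x ↦ f x - x • c) 0 K x := by
    simpa using (hf x hx).fun_sub ((hasDerivWithinAt_id x K).smul_const c)
  have hconst := hK.norm_image_sub_le_of_norm_hasDerivWithin_le (C := 0) hg (by simp) hw hz
  rw [zero_mul, norm_le_zero_iff] at hconst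
  rw [sub_smul, ← sub_eq_zero, ← hconst]
  abel

theorem eqOn_zero_of_im_deriv_eq_on_frontier {f : ℂ → ℂ} {K : Set ℂ} {C : ℝ} (hK : Convex ℝ K)
    (hKc : IsCompact K) (hKi : (interior K).Nonempty) (hf : AnalyticOnNhd ℂ f K)
    (hC : ∀ z ∈ frontier K, (deriv f z).im = C) {p q : ℂ} (hp : p ∈ K) (hq : q ∈ K) (hpq : p ≠ q)
    (hfp : f p = 0) (hfq : f q = 0) : Set.EqOn f 0 K := by
  have hcl : closure (interior K) = K := by
    rw [hK.closure_interior_eq_closure_of_nonempty_interior hKi, hKc.isClosed.closure_eq]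
  obtain ⟨c, hc⟩ : ∃ c, ∀ z ∈ K, deriv f z = c := by
    rw [← hcl]
    refine exists_forall_mem_closure_eq_const_of_im_eq_on_frontier isOpen_interior
      (hKc.isBounded.subset interior_subset) (hK.interior.isConnected hKi) ?_
      fun z hz ↦ hC z (frontier_interior_subset hz)
    exact (hcl.symm ▸ hf.deriv.differentiableOn).diffContOnCl
  have haff {z w : ℂ} (hz : z ∈ K) (hw : w ∈ K) : f z - f w = (z - w) • c :=
    sub_eq_smul_of_hasDerivWithinAt_const hK
      (fun x hx ↦ hc x hx ▸ (hf x hx).differentiableAt.hasDerivAt.hasDerivWithinAt) hz hw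
  have hc₀ : c = 0 := by simpa [hfp, hfq, sub_eq_zero, hpq] using (haff hp hq).symm
  intro z hz
  simpa [hfp, hc₀] using haff hz hp

/-- The vector field `ξ` is tangent to the segment from `p` to `q`: at each of its points, `ξ` is
a real multiple of `q - p`. For `p = q` this holds for every `ξ`, since `ξ z / 0 = 0`. -/
def TangentToSegment (ξ : ℂ → ℂ) (p q : ℂ) : Prop :=
  ∀ z ∈ segment ℝ p q, (ξ z / (q - p)).im = 0

namespace TangentToSegment

variable {ξ : ℂ → ℂ} {p q r z u : ℂ} {t : ℝ}

theorem of_conj_eq (hpq : q - p = t * u)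
    (h : ∀ z ∈ segment ℝ p q, conj (ξ z) = conj u / u * ξ z) : TangentToSegment ξ p q := by
  intro z hz
  rw [← conj_eq_iff_im, map_div₀, h z hz, hpq, map_mul, conj_ofReal]
  rcases eq_or_ne u 0 with rfl | hu
  · simp
  have hu' : conj u ≠ 0 := (map_ne_zero _).2 hu
  rw [div_mul_eq_mul_div, div_div, ← mul_assoc, mul_comm (u * t), mul_div_mul_left _ _ hu',
    mul_comm u]

theorem symm (h : TangentToSegment ξ p q) : TangentToSegment ξ q p := by
  intro z hz
  rw [← neg_sub q p, div_neg, neg_im, h z (segment_symm ℝ q p ▸ hz), neg_zero]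

theorem eq_zero_of_not_collinear (hq : TangentToSegment ξ p q) (hr : TangentToSegment ξ p r)
    (h : ¬ Collinear ℝ {p, q, r}) : ξ p = 0 := by
  have hq' := conj_eq_iff_im.2 (hq p (left_mem_segment ℝ p q))
  have hr' := conj_eq_iff_im.2 (hr p (left_mem_segment ℝ p r))
  contrapose! h
  rw [collinear_iff_im_div_eq_zero, ← conj_eq_iff_im, ← div_div_div_cancel_left' _ _ h, map_div₀,
    hq', hr']

theorem im_deriv_eq_zero (h : TangentToSegment ξ p q) (hpq : p ≠ q) (hz : z ∈ segment ℝ p q)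
    (hξ : DifferentiableAt ℂ ξ z) : (deriv ξ z).im = 0 := by
  rw [segment_eq_image_lineMap] at hz
  obtain ⟨s, hs, rfl⟩ := hz
  let φ (x : ℝ) : ℝ := (ξ (AffineMap.lineMap p q x) / (q - p)).im
  have hφ : HasDerivAt φ (deriv ξ (AffineMap.lineMap p q s)).im s := by
    have hcomp := (hξ.hasDerivAt.comp s AffineMap.hasDerivAt_lineMap).div_const (q - p)
    rw [mul_div_cancel_right₀ _ (sub_ne_zero.2 hpq.symm)] at hcomp
    exact imCLM.hasFDerivAt.comp_hasDerivAt s hcomp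
  have hφ₀ : ∀ x ∈ Set.Icc (0 : ℝ) 1, φ x = 0 := fun x hx ↦
    h _ (segment_eq_image_lineMap ℝ p q ▸ Set.mem_image_of_mem _ hx)
  have hconst : HasDerivWithinAt φ 0 (Set.Icc 0 1) s :=
    (hasDerivWithinAt_const s _ 0).congr hφ₀ (hφ₀ s hs)
  exact (uniqueDiffOn_Icc zero_lt_one s hs).eq_deriv _ hφ.hasDerivWithinAt hconst

end TangentToSegment

theorem eqOn_zero_convexHull_of_tangentToSegment {ξ : ℂ → ℂ} {p q r : ℂ}
    (h : ¬ Collinear ℝ {p, q, r}) (hξ : AnalyticOnNhd ℂ ξ (convexHull ℝ {p, q, r}))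
    (hpq : TangentToSegment ξ p q) (hpr : TangentToSegment ξ p r) (hqr : TangentToSegment ξ q r) :
    Set.EqOn ξ 0 (convexHull ℝ {p, q, r}) := by
  have hvertex : {p, q, r} ⊆ convexHull ℝ {p, q, r} := subset_convexHull ℝ _
  have hK : IsCompact (convexHull ℝ {p, q, r}) := (Set.toFinite _).isCompact_convexHull ℝ
  have hreal : ∀ z ∈ frontier (convexHull ℝ {p, q, r}), (deriv ξ z).im = 0 := by
    intro z hz
    have hdiff := (hξ z (hK.isClosed.frontier_subset hz)).differentiableAt
    rcases frontier_convexHull_subset_segments finrank_real_complex h hz with (hz | hz) | hz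
    · exact hpq.im_deriv_eq_zero (ne₁₂_of_not_collinear h) hz hdiff
    · exact hpr.im_deriv_eq_zero (ne₁₃_of_not_collinear h) hz hdiff
    · exact hqr.im_deriv_eq_zero (ne₂₃_of_not_collinear h) hz hdiff
  exact eqOn_zero_of_im_deriv_eq_on_frontier (convex_convexHull ℝ _) hK
    (interior_convexHull_nonempty_of_not_collinear finrank_real_complex h) hξ hreal
    (hvertex (by simp)) (hvertex (by simp)) (ne₁₂_of_not_collinear h)
    (hpq.eq_zero_of_not_collinear hpr h)
    (hpq.symm.eq_zero_of_not_collinear hqr (by rwa [Set.insert_comm]))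

theorem xi_vanishes_on_triangle_general
    (k₁ k₂ : ℝ) (hk₁ : k₁ ≠ 0) (hk₂ : k₂ ≠ 0) (hne : k₁ ≠ k₂)
    (ξ : ℂ → ℂ) (U : Set ℂ) (hU : IsOpen U)
    (v : ℂ) (hv : v = ((k₂ : ℂ) / ((k₂ : ℂ) - (k₁ : ℂ))) * (1 + (k₁ : ℂ) * Complex.I))
    (hDU : convexHull ℝ {(0 : ℂ), 1, v} ⊆ U)
    (hξ : DifferentiableOn ℂ ξ U)
    (hC0 : ∀ z ∈ segment ℝ (0 : ℂ) 1, conj (ξ z) = ξ z)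
    (hC1 : ∀ z ∈ segment ℝ (0 : ℂ) v,
      conj (ξ z) = ((1 - (k₁ : ℂ) * Complex.I) / (1 + (k₁ : ℂ) * Complex.I)) * ξ z)
    (hC2 : ∀ z ∈ segment ℝ (1 : ℂ) v,
      conj (ξ z) = ((1 - (k₂ : ℂ) * Complex.I) / (1 + (k₂ : ℂ) * Complex.I)) * ξ z) :
    ∀ z ∈ convexHull ℝ {(0 : ℂ), 1, v}, ξ z = 0 := by
  have hk : k₂ - k₁ ≠ 0 := sub_ne_zero.2 hne.symm
  have hk' : (k₂ : ℂ) - k₁ ≠ 0 := mod_cast hk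
  have hconj (k : ℝ) : conj (1 + (k : ℂ) * I) = 1 - k * I := by simp [sub_eq_add_neg]
  have hv₀ : v - 0 = (k₂ / (k₂ - k₁) : ℝ) * (1 + (k₁ : ℂ) * I) := by rw [hv]; push_cast; ring
  have hv₁ : v - 1 = (k₁ / (k₂ - k₁) : ℝ) * (1 + (k₂ : ℂ) * I) := by
    rw [hv]; push_cast; field_simp; ring
  have hvim : v.im = k₂ / (k₂ - k₁) * k₁ := by
    rw [← sub_zero v, hv₀, im_ofReal_mul]
    simp
  have hcol : ¬ Collinear ℝ {0, 1, v} := by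
    rw [collinear_iff_im_div_eq_zero]
    simp [hvim, hk₁, hk₂, hk]
  exact eqOn_zero_convexHull_of_tangentToSegment hcol ((hξ.analyticOnNhd hU).mono hDU)
    (.of_conj_eq (t := 1) (u := 1) (by simp) (by simpa using hC0))
    (.of_conj_eq hv₀ (by simpa only [hconj] using hC1))
    (.of_conj_eq hv₁ (by simpa only [hconj] using hC2))

/-- Let `k₁ ≠ k₂` be nonzero integers and let `D` be the triangle in `ℂ` with
vertices `0`, `1` and `v = (k₂/(k₂-k₁))(1 + k₁ i)`, whose edges `C₀, C₁, C₂`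
have slopes `0, k₁, k₂`.  If `ξ` is holomorphic on a neighborhood of `D` and
satisfies `conj ξ = ξ` on `C₀`, `conj ξ = μ₁ ξ` on `C₁`, `conj ξ = μ₂ ξ` on
`C₂`, where `μⱼ = (1 - kⱼ i)/(1 + kⱼ i)`, then `ξ` vanishes identically on `D`. -/
theorem xi_vanishes_on_triangle
    (k₁ k₂ : ℤ) (hk₁ : k₁ ≠ 0) (hk₂ : k₂ ≠ 0) (hne : k₁ ≠ k₂)
    (ξ : ℂ → ℂ) (U : Set ℂ) (hU : IsOpen U)
    (v : ℂ) (hv : v = ((k₂ : ℂ) / ((k₂ : ℂ) - (k₁ : ℂ))) * (1 + (k₁ : ℂ) * Complex.I))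
    (hDU : convexHull ℝ {(0 : ℂ), 1, v} ⊆ U)
    (hξ : DifferentiableOn ℂ ξ U)
    (hC0 : ∀ z ∈ segment ℝ (0 : ℂ) 1, (starRingEnd ℂ) (ξ z) = ξ z)
    (hC1 : ∀ z ∈ segment ℝ (0 : ℂ) v,
      (starRingEnd ℂ) (ξ z) =
        ((1 - (k₁ : ℂ) * Complex.I) / (1 + (k₁ : ℂ) * Complex.I)) * ξ z)
    (hC2 : ∀ z ∈ segment ℝ (1 : ℂ) v,
      (starRingEnd ℂ) (ξ z) =
        ((1 - (k₂ : ℂ) * Complex.I) / (1 + (k₂ : ℂ) * Complex.I)) * ξ z) :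
    ∀ z ∈ convexHull ℝ {(0 : ℂ), 1, v}, ξ z = 0 :=
  xi_vanishes_on_triangle_general k₁ k₂ (mod_cast hk₁) (mod_cast hk₂) (mod_cast hne) ξ U hU v
    (mod_cast hv) hDU hξ hC0 (mod_cast hC1) (mod_cast hC2)
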